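/- Let T = {1342, 3124, 3412} (patterns of length 4). Then the generating function for T-avoiders satisfies, as formal power series over ℚ, (1-x)^4·(1-2x)·(1-4x+2x^2)·F_T(x) = 1 - 9x + 32x^2 - 58x^3 + 58x^4 - 33x^5 + 8x^6; that is, F_T(x) = (1-9x+32x^2-58x^3+58x^4-33x^5+8x^6)/((1-x)^4(1-2x)(1-4x+2x^2)). -/

import Mathlib

open PowerSeries

/-- A permutation `π` of `{0,…,n-1}` contains the pattern `σ` (of length `k`) if there is an
order-embedding of positions on which the values of `π` appear in the same relative order as
the values of `σ`. -/
def ContainsPattern {n k : ℕ} (π : Equiv.Perm (Fin n)) (σ : Fin k → Fin k) : Prop :=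
  ∃ f : Fin k ↪o Fin n, ∀ a b : Fin k, σ a < σ b ↔ π (f a) < π (f b)

/-- The number of permutations of length `n` avoiding every pattern in `T`. -/
noncomputable def avoiderCount (T : Set (Fin 4 → Fin 4)) (n : ℕ) : ℕ :=
  Nat.card {π : Equiv.Perm (Fin n) // ∀ σ ∈ T, ¬ ContainsPattern π σ}

/-- The generating function `F_T(x) = ∑_n |S_n(T)| xⁿ` over `ℚ`. -/
noncomputable def avoiderGF (T : Set (Fin 4 → Fin 4)) : PowerSeries ℚ :=
  PowerSeries.mk fun n => (avoiderCount T n : ℚ)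

/-- The generating function of the Catalan numbers over `ℚ`. -/
noncomputable def catalanGF : PowerSeries ℚ :=
  PowerSeries.mk fun n => (catalan n : ℚ)

/-!
Build permutations from right to left by prepending first values. Prepending `v` to an avoider `π`
gives an avoider iff no three entries of `π` complete one of the three patterns with `v`; such a
`v` is a site of `π`. Every value is a site of a decreasing permutation. For any other avoider the
sites are governed by a few thresholds, such as the least site and the least value with a smaller
value on its left: every child is of one of three shapes (sparse, full, tail), with explicit new
thresholds. By induction the number of avoiders grown from `π` in `m` steps is affine in the
thresholds, up to binomial coefficients, with coefficients that obey linear recurrences in `m`.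
Solving these by generating functions, starting from the empty permutation, gives the formula.
-/

namespace PatternAvoidance

open Equiv Finset

/-! ### Prepending a first value -/

section Prepend

variable {n k : ℕ}

/-- The permutation with first value `v` whose remaining values are ordered like those of `π`. -/
def prepend (v : Fin (n + 1)) (π : Perm (Fin n)) : Perm (Fin (n + 1)) :=
  (finSuccEquiv n).trans ((Equiv.optionCongr π).trans (finSuccEquiv' v).symm)

@[simp]
theorem prepend_zero (v : Fin (n + 1)) (π : Perm (Fin n)) : prepend v π 0 = v := by
  simp [prepend]

@[simp]
theorem prepend_succ (v : Fin (n + 1)) (π : Perm (Fin n)) (i : Fin n) :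
    prepend v π i.succ = v.succAbove (π i) := by
  simp [prepend]

theorem prepend_bijective (n : ℕ) :
    Function.Bijective fun x : Fin (n + 1) × Perm (Fin n) => prepend x.1 x.2 := by
  rw [Fintype.bijective_iff_injective_and_card]
  refine ⟨?_, by simp [Fintype.card_perm, Nat.factorial_succ]⟩
  rintro ⟨v, π⟩ ⟨w, ρ⟩ (h : prepend v π = prepend w ρ)
  obtain rfl : v = w := by simpa using congr($h 0)
  have hπρ : π = ρ := Equiv.ext fun i => by simpa using congr($h i.succ)
  rw [hπρ]

theorem orderEmbedding_eq_comp_succ_of_ne_zero (f : Fin k ↪o Fin (n + 1)) (hf : ∀ a, f a ≠ 0) :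
    ∃ g : Fin k ↪o Fin n, ∀ a, f a = (g a).succ :=
  ⟨OrderEmbedding.ofStrictMono (fun a => (f a).pred (hf a)) fun a b hab => by simpa using hab,
    fun a => (Fin.succ_pred (f a) (hf a)).symm⟩

theorem containsPattern_prepend_iff (v : Fin (n + 1)) (π : Perm (Fin n))
    (σ : Fin (k + 1) → Fin (k + 1)) :
    ContainsPattern (prepend v π) σ ↔ ContainsPattern π σ ∨
      ∃ g : Fin k ↪o Fin n, (∀ a b, σ a.succ < σ b.succ ↔ π (g a) < π (g b)) ∧
        ∀ a, (σ 0 < σ a.succ ↔ v < v.succAbove (π (g a))) ∧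
          (σ a.succ < σ 0 ↔ v.succAbove (π (g a)) < v) := by
  constructor
  · rintro ⟨f, hf⟩
    by_cases h0 : f 0 = 0
    · have hne (a : Fin k) : f a.succ ≠ 0 := by
        rw [← h0]; exact f.injective.ne (Fin.succ_ne_zero a)
      obtain ⟨g, hg⟩ := orderEmbedding_eq_comp_succ_of_ne_zero ((Fin.succOrderEmb k).trans f) hne
      replace hg (a : Fin k) : f a.succ = (g a).succ := hg a
      exact .inr ⟨g, fun a b => by simpa [hg] using hf a.succ b.succ,
        fun a => ⟨by simpa [hg, h0] using hf 0 a.succ, by simpa [hg, h0] using hf a.succ 0⟩⟩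
    · have hne (a : Fin (k + 1)) : f a ≠ 0 :=
        Fin.ne_zero_of_lt ((Fin.pos_of_ne_zero h0).trans_le (f.monotone (Fin.zero_le a)))
      obtain ⟨g, hg⟩ := orderEmbedding_eq_comp_succ_of_ne_zero f hne
      exact .inl ⟨g, fun a b => by simpa [hg] using hf a b⟩
  · rintro (⟨g, hg⟩ | ⟨g, hg, hg0⟩)
    · exact ⟨g.trans (Fin.succOrderEmb n), fun a b => by simpa using hg a b⟩
    · refine ⟨OrderEmbedding.ofStrictMono (Fin.cons 0 fun a => (g a).succ)
        (Fin.strictMono_cons.2 ⟨fun a => Fin.succ_pos _, fun a b hab => by simpa using hab⟩), ?_⟩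
      simp [Fin.forall_fin_succ, hg, hg0]

/-- The permutation `π` contains no pattern of `T`. -/
def Avoids (T : Set (Fin k → Fin k)) (π : Perm (Fin n)) : Prop :=
  ∀ σ ∈ T, ¬ContainsPattern π σ

theorem Avoids.of_prepend {T : Set (Fin (k + 1) → Fin (k + 1))} {v : Fin (n + 1)}
    {π : Perm (Fin n)} (h : Avoids T (prepend v π)) : Avoids T π :=
  fun σ hσ hπ => h σ hσ ((containsPattern_prepend_iff v π σ).2 (.inl hπ))

theorem avoids_of_lt {T : Set (Fin k → Fin k)} (hnk : n < k) (π : Perm (Fin n)) : Avoids T π :=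
  fun _ _ ⟨f, _⟩ => by
    have hkn := Fintype.card_le_of_embedding f.toEmbedding
    simp only [Fintype.card_fin] at hkn
    omega

open Classical in
/-- The number of `T`-avoiders obtained from `π` by prepending `m` values one at a time, where
every prepended value must again give a `T`-avoider. -/
noncomputable def descendantCount (T : Set (Fin k → Fin k)) :
    ℕ → {n : ℕ} → Perm (Fin n) → ℕ
  | 0, _, _ => 1
  | m + 1, n, π =>
    ∑ v : Fin (n + 1), if Avoids T (prepend v π) then descendantCount T m (prepend v π) else 0

open Classical in
theorem avoiderCount_add_eq_sum_descendantCount (T : Set (Fin 4 → Fin 4)) (n m : ℕ) :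
    avoiderCount T (n + m) =
      ∑ π : Perm (Fin n), if Avoids T π then descendantCount T m π else 0 := by
  induction m generalizing n with
  | zero =>
    rw [avoiderCount, Nat.card_eq_fintype_card, Fintype.card_subtype, card_filter]
    exact sum_congr rfl fun π _ => if_congr Iff.rfl rfl rfl
  | succ m ih =>
    rw [← Nat.add_assoc, Nat.add_right_comm, ih, ← (prepend_bijective n).sum_comp,
      Fintype.sum_prod_type_right]
    refine sum_congr rfl fun π _ => ?_
    split_ifs with hπ
    · rfl
    · exact sum_eq_zero fun v _ => if_neg fun h => hπ h.of_prepend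

theorem avoiderCount_eq_descendantCount (T : Set (Fin 4 → Fin 4)) (m : ℕ) :
    avoiderCount T m = descendantCount T m (1 : Perm (Fin 0)) := by
  classical
  rw [← Nat.zero_add m, avoiderCount_add_eq_sum_descendantCount, Fintype.sum_unique,
    if_pos (avoids_of_lt (by simp) _), Nat.zero_add]
  congr!

open Classical in
/-- The contribution to `descendantCount T (m + 1) π` of the descendants in which the value placed
directly in front of `π` is `v`. It is indexed by `ℕ`, with value `0` for `v > n`, so that sums
over sites can be cut into intervals. -/
noncomputable def siteCount (T : Set (Fin k → Fin k)) (m : ℕ) (π : Perm (Fin n)) (v : ℕ) : ℕ :=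
  if h : v < n + 1 then
    if Avoids T (prepend ⟨v, h⟩ π) then descendantCount T m (prepend ⟨v, h⟩ π) else 0
  else 0

theorem descendantCount_succ (T : Set (Fin k → Fin k)) (m : ℕ) (π : Perm (Fin n)) :
    descendantCount T (m + 1) π = ∑ v ∈ range (n + 1), siteCount T m π v := by
  simp only [sum_range, descendantCount, siteCount, Fin.is_lt, dite_true, Fin.eta]

theorem siteCount_of_avoids {T : Set (Fin k → Fin k)} {π : Perm (Fin n)} {v : Fin (n + 1)}
    (h : Avoids T (prepend v π)) (m : ℕ) :
    siteCount T m π v = descendantCount T m (prepend v π) := by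
  simp only [siteCount, Fin.is_lt, dite_true, Fin.eta, if_pos h]

theorem siteCount_of_not_avoids {T : Set (Fin k → Fin k)} {π : Perm (Fin n)} {v : Fin (n + 1)}
    (h : ¬Avoids T (prepend v π)) (m : ℕ) : siteCount T m π v = 0 := by
  simp only [siteCount, Fin.is_lt, dite_true, Fin.eta, if_neg h]

end Prepend

/-! ### The order in which values appear -/

section Precedes

variable {n : ℕ} {π : Perm (Fin n)}

/-- The value `p` appears to the left of the value `q` in `π`. Values are natural numbers, so that
those of `π` and of `prepend v π` can be compared by arithmetic. -/
def Precedes (π : Perm (Fin n)) (p q : ℕ) : Prop :=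
  ∃ i j : Fin n, i < j ∧ (π i : ℕ) = p ∧ (π j : ℕ) = q

theorem Precedes.left_lt {p q : ℕ} (h : Precedes π p q) : p < n := by
  obtain ⟨i, -, -, rfl, -⟩ := h
  exact (π i).isLt

theorem Precedes.right_lt {p q : ℕ} (h : Precedes π p q) : q < n := by
  obtain ⟨-, j, -, -, rfl⟩ := h
  exact (π j).isLt

theorem Precedes.trans {p q r : ℕ} (hpq : Precedes π p q) (hqr : Precedes π q r) :
    Precedes π p r := by
  obtain ⟨i, j, hij, hi, hj⟩ := hpq
  obtain ⟨j', k, hjk, hj', hk⟩ := hqr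
  obtain rfl : j' = j := π.injective (Fin.ext (hj'.trans hj.symm))
  exact ⟨i, k, hij.trans hjk, hi, hk⟩

theorem precedes_or_precedes {p q : ℕ} (hp : p < n) (hq : q < n) (hpq : p ≠ q) :
    Precedes π p q ∨ Precedes π q p := by
  have hne : π.symm ⟨p, hp⟩ ≠ π.symm ⟨q, hq⟩ := by simpa using hpq
  exact hne.lt_or_gt.imp (fun h => ⟨_, _, h, by simp, by simp⟩)
    (fun h => ⟨_, _, h, by simp, by simp⟩)

theorem exists_orderEmbedding_fin_three_iff (P : ℕ → ℕ → ℕ → Prop) :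
    (∃ g : Fin 3 ↪o Fin n, P (π (g 0)) (π (g 1)) (π (g 2))) ↔
      ∃ x y z, Precedes π x y ∧ Precedes π y z ∧ P x y z := by
  constructor
  · rintro ⟨g, hg⟩
    exact ⟨_, _, _, ⟨g 0, g 1, by simp, rfl, rfl⟩, ⟨g 1, g 2, by simp, rfl, rfl⟩, hg⟩
  · rintro ⟨_, _, _, ⟨i, j, hij, rfl, rfl⟩, ⟨j', k, hjk, hj, rfl⟩, hP⟩
    obtain rfl : j' = j := π.injective (Fin.ext hj)
    exact ⟨OrderEmbedding.ofStrictMono ![i, j', k] (by simp [hij, hjk]), hP⟩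

/-- `Fin.succAbove` on natural numbers: the value in `prepend w π` of the entry `x` of `π`. -/
def shift (w x : ℕ) : ℕ := if x < w then x else x + 1

theorem shift_of_lt {w x : ℕ} (h : x < w) : shift w x = x := if_pos h

theorem shift_of_le {w x : ℕ} (h : w ≤ x) : shift w x = x + 1 := if_neg h.not_gt

theorem val_succAbove_eq_shift (w : Fin (n + 1)) (x : Fin n) :
    (w.succAbove x : ℕ) = shift w x := by
  simp only [Fin.succAbove, Fin.lt_def, shift]
  split_ifs <;> simp_all

variable {w : Fin (n + 1)}

theorem precedes_prepend_shift {q : ℕ} (hq : q < n) : Precedes (prepend w π) w (shift w q) :=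
  ⟨0, (π.symm ⟨q, hq⟩).succ, Fin.succ_pos _, by simp, by simp [val_succAbove_eq_shift]⟩

theorem Precedes.prepend {p q : ℕ} (h : Precedes π p q) :
    Precedes (prepend w π) (shift w p) (shift w q) := by
  obtain ⟨i, j, hij, rfl, rfl⟩ := h
  exact ⟨i.succ, j.succ, by simpa using hij, by simp [val_succAbove_eq_shift],
    by simp [val_succAbove_eq_shift]⟩

theorem precedes_prepend_iff {p q : ℕ} :
    Precedes (prepend w π) p q ↔ (p = w ∧ ∃ q' < n, q = shift w q') ∨
      ∃ p' q', Precedes π p' q' ∧ p = shift w p' ∧ q = shift w q' := by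
  constructor
  · rintro ⟨i, j, hij, rfl, rfl⟩
    obtain ⟨j, rfl⟩ := Fin.exists_succ_eq.2 (Fin.ne_zero_of_lt hij)
    rcases Fin.eq_zero_or_eq_succ i with rfl | ⟨i, rfl⟩
    · exact .inl ⟨by simp, π j, (π j).isLt, by simp [val_succAbove_eq_shift]⟩
    · exact .inr ⟨π i, π j, ⟨i, j, by simpa using hij, rfl, rfl⟩,
        by simp [val_succAbove_eq_shift], by simp [val_succAbove_eq_shift]⟩
  · rintro (⟨rfl, q', hq', rfl⟩ | ⟨p', q', h, rfl, rfl⟩)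
    · exact precedes_prepend_shift hq'
    · exact h.prepend

theorem forall_precedes_prepend {P : ℕ → ℕ → Prop} :
    (∀ p q, Precedes (prepend w π) p q → P p q) ↔
      (∀ q < n, P w (shift w q)) ∧ ∀ p q, Precedes π p q → P (shift w p) (shift w q) := by
  constructor
  · exact fun h => ⟨fun q hq => h _ _ (precedes_prepend_shift hq), fun p q hpq => h _ _ hpq.prepend⟩
  · rintro ⟨hfirst, hrest⟩ p q hpq
    rcases precedes_prepend_iff.1 hpq with ⟨rfl, q', hq', rfl⟩ | ⟨p', q', h, rfl, rfl⟩
    · exact hfirst q' hq'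
    · exact hrest p' q' h

theorem shift_injective (w : ℕ) : Function.Injective (shift w) := by
  intro x y h
  simp only [shift] at h
  split_ifs at h <;> omega

theorem shift_ne (w x : ℕ) : shift w x ≠ w := by
  simp only [shift]
  split_ifs <;> omega

theorem not_precedes_prepend_self {p : ℕ} : ¬Precedes (prepend w π) p w := by
  intro h
  rcases precedes_prepend_iff.1 h with ⟨-, q, -, hq⟩ | ⟨_, q, -, -, hq⟩ <;>
    exact shift_ne _ _ hq.symm

theorem forall_precedes_precedes_prepend {P : ℕ → ℕ → ℕ → Prop} :
    (∀ x y z, Precedes (prepend w π) x y → Precedes (prepend w π) y z → P x y z) ↔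
      (∀ y z, Precedes π y z → P w (shift w y) (shift w z)) ∧
        ∀ x y z, Precedes π x y → Precedes π y z → P (shift w x) (shift w y) (shift w z) := by
  constructor
  · exact fun h => ⟨fun y z hyz => h _ _ _ (precedes_prepend_shift hyz.left_lt) hyz.prepend,
      fun x y z hxy hyz => h _ _ _ hxy.prepend hyz.prepend⟩
  · rintro ⟨hfirst, hrest⟩ x y z hxy hyz
    rcases precedes_prepend_iff.1 hyz with ⟨rfl, -⟩ | ⟨y, z, hyz', rfl, rfl⟩
    · exact absurd hxy not_precedes_prepend_self
    · rcases precedes_prepend_iff.1 hxy with ⟨rfl, -⟩ | ⟨x, y', hxy, rfl, hy⟩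
      · exact hfirst y z hyz'
      · obtain rfl := shift_injective _ hy
        exact hrest x y z hxy hyz'

end Precedes

/-! ### Sites -/

section Site

variable {n : ℕ} {π : Perm (Fin n)} {w : Fin (n + 1)}

/-- The set of patterns 1342, 3124, 3412, with values counted from `0`. -/
def patterns : Set (Fin 4 → Fin 4) := {![0, 2, 3, 1], ![2, 0, 1, 3], ![2, 3, 0, 1]}

/-- Prepending the value `v` turns the entries `x`, `y`, `z`, in this order from left to right,
into the last three entries of a 1342, a 3412 or a 3124, respectively. -/
def CompletesPattern (v x y z : ℕ) : Prop :=
  (v ≤ z ∧ z < x ∧ x < y) ∨ (y < z ∧ z < v ∧ v ≤ x) ∨ (x < y ∧ y < v ∧ v ≤ z)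

/-- No three entries of `π` form a pattern 1342, 3124 or 3412 with a prepended value `v`. -/
def IsSite (π : Perm (Fin n)) (v : ℕ) : Prop :=
  ∀ x y z, Precedes π x y → Precedes π y z → ¬CompletesPattern v x y z

theorem containsPattern_1342_prepend_iff :
    ContainsPattern (prepend w π) ![0, 2, 3, 1] ↔ ContainsPattern π ![0, 2, 3, 1] ∨
      ∃ x y z, Precedes π x y ∧ Precedes π y z ∧ w ≤ z ∧ z < x ∧ x < y := by
  rw [containsPattern_prepend_iff,
    ← exists_orderEmbedding_fin_three_iff fun x y z => w ≤ z ∧ z < x ∧ x < y]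
  refine or_congr_right (exists_congr fun g => ?_)
  simp only [Fin.forall_fin_succ, Fin.lt_def, val_succAbove_eq_shift, shift, Matrix.cons_val_succ,
    Matrix.cons_val_zero, Fin.succ_zero_eq_one, Fin.succ_one_eq_two, IsEmpty.forall_iff]
  grind

theorem containsPattern_3412_prepend_iff :
    ContainsPattern (prepend w π) ![2, 3, 0, 1] ↔ ContainsPattern π ![2, 3, 0, 1] ∨
      ∃ x y z, Precedes π x y ∧ Precedes π y z ∧ y < z ∧ z < w ∧ w ≤ x := by
  rw [containsPattern_prepend_iff,
    ← exists_orderEmbedding_fin_three_iff fun x y z => y < z ∧ z < w ∧ w ≤ x]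
  refine or_congr_right (exists_congr fun g => ?_)
  simp only [Fin.forall_fin_succ, Fin.lt_def, val_succAbove_eq_shift, shift, Matrix.cons_val_succ,
    Matrix.cons_val_zero, Fin.succ_zero_eq_one, Fin.succ_one_eq_two, IsEmpty.forall_iff]
  grind

theorem containsPattern_3124_prepend_iff :
    ContainsPattern (prepend w π) ![2, 0, 1, 3] ↔ ContainsPattern π ![2, 0, 1, 3] ∨
      ∃ x y z, Precedes π x y ∧ Precedes π y z ∧ x < y ∧ y < w ∧ w ≤ z := by
  rw [containsPattern_prepend_iff,
    ← exists_orderEmbedding_fin_three_iff fun x y z => x < y ∧ y < w ∧ w ≤ z]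
  refine or_congr_right (exists_congr fun g => ?_)
  simp only [Fin.forall_fin_succ, Fin.lt_def, val_succAbove_eq_shift, shift, Matrix.cons_val_succ,
    Matrix.cons_val_zero, Fin.succ_zero_eq_one, Fin.succ_one_eq_two, IsEmpty.forall_iff]
  grind

theorem avoids_prepend_iff : Avoids patterns (prepend w π) ↔ Avoids patterns π ∧ IsSite π w := by
  simp only [Avoids, patterns, Set.mem_insert_iff, Set.mem_singleton_iff, forall_eq_or_imp,
    forall_eq, containsPattern_1342_prepend_iff, containsPattern_3124_prepend_iff,
    containsPattern_3412_prepend_iff, IsSite, CompletesPattern]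
  grind

theorem isSite_length (π : Perm (Fin n)) : IsSite π n := by
  intro x y z hxy hyz h
  have := hxy.left_lt
  have := hyz.right_lt
  grind [CompletesPattern]

theorem isSite_prepend_iff_of_le {g : ℕ} (hg : g ≤ w) :
    IsSite (prepend w π) g ↔ IsSite π g ∧ (∀ p q, Precedes π p q → q < g → q ≤ p) ∧
      ∀ b c, Precedes π b c → w ≤ b → g ≤ c → w ≤ c := by
  have hold (x y z : ℕ) : CompletesPattern g (shift w x) (shift w y) (shift w z) ↔
    CompletesPattern g x y z := by grind [CompletesPattern, shift]
  have hnew (y z : ℕ) : CompletesPattern g w (shift w y) (shift w z) ↔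
    (g ≤ z ∧ z < w ∧ w ≤ y) ∨ (y < z ∧ z < g) := by grind [CompletesPattern, shift]
  simp only [IsSite, forall_precedes_precedes_prepend, hold, hnew]
  grind

theorem isSite_prepend_succ_iff {g : ℕ} (hg : w ≤ g) :
    IsSite (prepend w π) (g + 1) ↔
      IsSite π g ∧ ∀ p q, Precedes π p q → w ≤ p → p < g → q < g := by
  have hold (x y z : ℕ) : CompletesPattern (g + 1) (shift w x) (shift w y) (shift w z) ↔
    CompletesPattern g x y z := by grind [CompletesPattern, shift]
  have hnew (y z : ℕ) : CompletesPattern (g + 1) w (shift w y) (shift w z) ↔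
    w ≤ y ∧ y < g ∧ g ≤ z := by grind [CompletesPattern, shift]
  simp only [IsSite, forall_precedes_precedes_prepend, hold, hnew]
  grind

end Site

/-! ### The shapes of an avoider and its children -/

section Shape

variable {n : ℕ} {π : Perm (Fin n)} {w : Fin (n + 1)} {a d e f : ℕ}

/-- `d` is the least value with a smaller value on its left, `e` is the least site of `π`, and
`f` splits the values below `d`: those below `f` have a value `≥ d` on their left, the others
have none. -/
structure HasThresholds (π : Perm (Fin n)) (e f d : ℕ) : Prop where
  e_le_f : e ≤ f
  f_le_d : f ≤ d
  d_lt : d < n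
  isSite_iff : ∀ v ≤ d, IsSite π v ↔ e ≤ v
  le_of_precedes : ∀ p q, Precedes π p q → q < d → q ≤ p
  exists_lt_precedes : ∃ p < d, Precedes π p d
  exists_precedes_iff : ∀ c < d, (∃ b ≥ d, Precedes π b c) ↔ c < f

/-- Shape in which no value strictly between `d` and the length is a site. -/
structure IsSparse (π : Perm (Fin n)) (e f d : ℕ) : Prop extends HasThresholds π e f d where
  not_isSite : ∀ v, d < v → v < n → ¬IsSite π v

/-- Shape in which the values `≥ d` decrease from left to right and all values above `d` are
sites. -/
structure IsFull (π : Perm (Fin n)) (e d : ℕ) : Prop extends HasThresholds π e e d where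
  isSite_of_lt : ∀ v, d < v → v ≤ n → IsSite π v
  le_of_precedes_of_le : ∀ p q, Precedes π p q → d ≤ p → q ≤ p

/-- Shape in which the sites are the values `≥ a`, the values `≥ a` decrease from left to right,
and some value below `a` has a smaller value on its left. -/
structure IsTail (π : Perm (Fin n)) (a : ℕ) : Prop where
  a_le : a ≤ n
  isSite_iff : ∀ v ≤ n, IsSite π v ↔ a ≤ v
  exists_lt_precedes : ∃ p q, Precedes π p q ∧ p < q ∧ q < a
  le_of_precedes_of_le : ∀ p q, Precedes π p q → a ≤ p → q ≤ p

theorem strictAnti_iff_precedes : StrictAnti π ↔ ∀ p q, Precedes π p q → q ≤ p := by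
  constructor
  · rintro h p q ⟨i, j, hij, rfl, rfl⟩
    exact (h hij).le
  · exact fun h i j hij => (Fin.le_def.2 (h _ _ ⟨i, j, hij, rfl, rfl⟩)).lt_of_ne
      (π.injective.ne hij.ne')

theorem isSite_of_strictAnti (h : StrictAnti π) (v : ℕ) : IsSite π v := by
  intro x y z hxy hyz
  have := strictAnti_iff_precedes.1 h x y hxy
  have := strictAnti_iff_precedes.1 h y z hyz
  grind [CompletesPattern]

theorem strictAnti_prepend_last (h : StrictAnti π) : StrictAnti (prepend (Fin.last n) π) := by
  rw [strictAnti_iff_precedes] at h ⊢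
  refine forall_precedes_prepend.2 ⟨fun q hq => ?_, fun p q hpq => ?_⟩
  · simp [shift_of_lt hq, hq.le]
  · simpa [shift_of_lt hpq.left_lt, shift_of_lt hpq.right_lt] using h p q hpq

theorem precedes_of_forall_le (h : ∀ p q, Precedes π p q → q ≤ a → q ≤ p) {p q : ℕ}
    (hqp : q < p) (hpa : p ≤ a) (hpn : p < n) : Precedes π p q :=
  (precedes_or_precedes hpn (hqp.trans hpn) hqp.ne').resolve_right fun hqp' => by
    have := h q p hqp' hpa
    omega

theorem hasThresholds_prepend (hwn : w < n) (hw : IsSite π w)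
    (hdec : ∀ p q, Precedes π p q → q ≤ w → q ≤ p) :
    HasThresholds (prepend w π) w w (w + 1) where
  e_le_f := le_rfl
  f_le_d := Nat.le_succ w
  d_lt := Nat.succ_lt_succ hwn
  isSite_iff v hv := by
    rcases hv.lt_or_eq with hv | rfl
    · rw [isSite_prepend_iff_of_le (by omega)]
      constructor
      · rintro ⟨-, -, h⟩
        by_contra! hvw
        have := h w (w - 1) (precedes_of_forall_le hdec (by omega) le_rfl hwn) le_rfl (by omega)
        omega
      · intro h
        obtain rfl : v = w := by omega
        exact ⟨hw, fun p q hpq hq => hdec p q hpq hq.le, by simp⟩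
    · rw [isSite_prepend_succ_iff le_rfl]
      exact ⟨fun _ => Nat.le_succ w, fun _ => ⟨hw, by grind⟩⟩
  le_of_precedes := forall_precedes_prepend.2
    ⟨by grind [shift], fun p q hpq => by grind [shift]⟩
  exists_lt_precedes := ⟨w, Nat.lt_succ_self w, by
    simpa [shift_of_le] using precedes_prepend_shift (w := w) (π := π) hwn⟩
  exists_precedes_iff c hc := by
    constructor
    · rintro ⟨b, -, hbc⟩
      refine (Nat.le_of_lt_succ hc).lt_of_ne ?_
      rintro rfl
      exact not_precedes_prepend_self hbc
    · intro hcw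
      exact ⟨w + 1, le_rfl, by
        simpa [shift_of_le, shift_of_lt hcw] using
          (precedes_of_forall_le hdec hcw le_rfl hwn).prepend (w := w)⟩

theorem isFull_prepend_of_strictAnti (h : StrictAnti π) (hwn : w < n) :
    IsFull (prepend w π) w (w + 1) where
  toHasThresholds := hasThresholds_prepend hwn (isSite_of_strictAnti h w)
    fun p q hpq _ => strictAnti_iff_precedes.1 h p q hpq
  isSite_of_lt v hv hvn := by
    obtain ⟨v, rfl⟩ : ∃ v', v = v' + 1 := ⟨v - 1, by omega⟩
    rw [isSite_prepend_succ_iff (by omega)]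
    refine ⟨isSite_of_strictAnti h v, fun p q hpq _ hpv => ?_⟩
    exact (strictAnti_iff_precedes.1 h p q hpq).trans_lt hpv
  le_of_precedes_of_le := by
    rw [strictAnti_iff_precedes] at h
    exact forall_precedes_prepend.2 ⟨by grind [shift], fun p q hpq => by grind [shift]⟩

namespace HasThresholds

theorem isSite_d (h : HasThresholds π e f d) : IsSite π d :=
  (h.isSite_iff d le_rfl).2 (h.e_le_f.trans h.f_le_d)

/-- Otherwise a value below `d` on the left of `d`, then `d`, then `c` would complete a 1342 with
the site `e`. -/
theorem precedes_d (h : HasThresholds π e f d) {c : ℕ} (hec : e ≤ c) (hcd : c < d) :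
    Precedes π c d := by
  obtain ⟨p, hpd, hp⟩ := h.exists_lt_precedes
  rcases precedes_or_precedes (hcd.trans h.d_lt) h.d_lt hcd.ne with hcd' | hdc
  · exact hcd'
  · rcases (h.le_of_precedes p c (hp.trans hdc) hcd).eq_or_lt with rfl | hcp
    · exact hp
    · have he : IsSite π e := (h.isSite_iff e (hec.trans hcd.le)).2 le_rfl
      exact absurd (.inl ⟨hec, hcp, hpd⟩) (he p d c hp hdc)

theorem isSparse_prepend_last (h : HasThresholds π e f d) :
    IsSparse (prepend (Fin.last n) π) e d d where
  e_le_f := h.e_le_f.trans h.f_le_d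
  f_le_d := le_rfl
  d_lt := h.d_lt.trans (Nat.lt_succ_self n)
  isSite_iff v hv := by
    rw [isSite_prepend_iff_of_le (hv.trans h.d_lt.le), h.isSite_iff v hv]
    exact and_iff_left ⟨fun p q hpq hq => h.le_of_precedes p q hpq (hq.trans_le hv),
      fun b c hbc hb => absurd hbc.left_lt hb.not_gt⟩
  le_of_precedes := forall_precedes_prepend.2
    ⟨fun q hq _ => by grind [shift], fun p q hpq => by
      simpa [shift_of_lt hpq.left_lt, shift_of_lt hpq.right_lt] using h.le_of_precedes p q hpq⟩
  exists_lt_precedes := by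
    obtain ⟨p, hpd, hp⟩ := h.exists_lt_precedes
    refine ⟨p, hpd, ?_⟩
    simpa [shift_of_lt hp.left_lt, shift_of_lt hp.right_lt] using hp.prepend (w := Fin.last n)
  exists_precedes_iff c hc := by
    have hcn := hc.trans h.d_lt
    refine iff_of_true ⟨n, h.d_lt.le, ?_⟩ hc
    simpa [shift_of_lt hcn] using precedes_prepend_shift (w := Fin.last n) (π := π) hcn
  not_isSite v hdv hvn := by
    rw [isSite_prepend_iff_of_le (Nat.le_of_lt_succ hvn)]
    rintro ⟨-, hdec, -⟩
    obtain ⟨p, hpd, hp⟩ := h.exists_lt_precedes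
    exact (hdec p d hp hdv).not_gt hpd

theorem hasThresholds_prepend_d (h : HasThresholds π e f d) (hw : w = d) :
    HasThresholds (prepend w π) f f (d + 1) where
  e_le_f := le_rfl
  f_le_d := h.f_le_d.trans (Nat.le_succ d)
  d_lt := Nat.succ_lt_succ h.d_lt
  isSite_iff v hv := by
    rcases hv.lt_or_eq with hv | rfl
    · rw [isSite_prepend_iff_of_le (by omega), h.isSite_iff v (by omega), hw]
      constructor
      · rintro ⟨-, -, hle⟩
        by_contra! hvf
        obtain ⟨b, hb, hbv⟩ := (h.exists_precedes_iff v (hvf.trans_le h.f_le_d)).2 hvf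
        exact (hle b v hbv hb le_rfl).not_gt (hvf.trans_le h.f_le_d)
      · refine fun hfv => ⟨h.e_le_f.trans hfv,
          fun p q hpq hq => h.le_of_precedes p q hpq (by omega), fun b c hbc hb hvc => ?_⟩
        by_contra! hcd
        exact ((h.exists_precedes_iff c hcd).1 ⟨b, hb, hbc⟩).not_ge (hfv.trans hvc)
    · rw [isSite_prepend_succ_iff hw.le]
      exact iff_of_true ⟨h.isSite_d, by omega⟩ (h.f_le_d.trans (Nat.le_succ d))
  le_of_precedes := forall_precedes_prepend.2
    ⟨by grind [shift], fun p q hpq => by have := h.le_of_precedes p q hpq; grind [shift]⟩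
  exists_lt_precedes := ⟨d, Nat.lt_succ_self d, by
    simpa [shift_of_le, hw] using precedes_prepend_shift (w := w) (π := π) h.d_lt⟩
  exists_precedes_iff c hc := by
    rcases (Nat.le_of_lt_succ hc).eq_or_lt with rfl | hcd
    · refine iff_of_false ?_ h.f_le_d.not_gt
      rw [← hw]
      exact fun ⟨_, _, hbw⟩ => not_precedes_prepend_self hbw
    · rw [← h.exists_precedes_iff c hcd]
      constructor
      · rintro ⟨b, hb, hbc⟩
        rcases precedes_prepend_iff.1 hbc with ⟨rfl, -⟩ | ⟨b, c, hbc, rfl, rfl⟩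
        · omega
        · exact ⟨b, by grind [shift], by grind [shift]⟩
      · rintro ⟨b, hb, hbc⟩
        refine ⟨b + 1, Nat.succ_le_succ hb, ?_⟩
        simpa [hw, shift_of_le hb, shift_of_lt hcd] using hbc.prepend (w := w)

theorem isSparse_prepend_of_lt (h : HasThresholds π e f d) (hew : e ≤ w) (hwd : w < d)
    (hsite : ∀ v, d < v → v < n → IsSite π v → ∃ q ≥ v, Precedes π w q) :
    IsSparse (prepend w π) w w (w + 1) where
  toHasThresholds := hasThresholds_prepend (hwd.trans h.d_lt) ((h.isSite_iff w hwd.le).2 hew)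
    fun p q hpq hq => h.le_of_precedes p q hpq (hq.trans_lt hwd)
  not_isSite v hv hvn := by
    obtain ⟨v, rfl⟩ : ∃ v', v = v' + 1 := ⟨v - 1, by omega⟩
    rw [isSite_prepend_succ_iff (by omega)]
    rintro ⟨hv', hlt⟩
    obtain ⟨q, hvq, hq⟩ : ∃ q ≥ v, Precedes π w q := by
      rcases le_or_gt v d with hvd | hdv
      · exact ⟨d, hvd, h.precedes_d hew hwd⟩
      · exact hsite v hdv (by omega) hv'
    exact (hlt w q hq le_rfl (by omega)).not_ge hvq

end HasThresholds

theorem IsSparse.prepend_of_lt (h : IsSparse π e f d) (hew : e ≤ w) (hwd : w < d) :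
    IsSparse (prepend w π) w w (w + 1) :=
  h.isSparse_prepend_of_lt hew hwd fun v hdv hvn hv => absurd hv (h.not_isSite v hdv hvn)

theorem IsSparse.prepend_d (h : IsSparse π e f d) (hw : w = d) :
    IsSparse (prepend w π) f f (d + 1) where
  toHasThresholds := h.hasThresholds_prepend_d hw
  not_isSite v hv hvn := by
    obtain ⟨v, rfl⟩ : ∃ v', v = v' + 1 := ⟨v - 1, by omega⟩
    rw [isSite_prepend_succ_iff (by omega)]
    exact fun hv' => h.not_isSite v (by omega) (by omega) hv'.1

theorem IsFull.isSparse_prepend_of_lt (h : IsFull π e d) (hew : e ≤ w) (hwd : w < d) :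
    IsSparse (prepend w π) w w (w + 1) := by
  have hdn := h.d_lt
  refine h.toHasThresholds.isSparse_prepend_of_lt hew hwd fun v hdv hvn _ =>
    ⟨v, le_rfl, (precedes_or_precedes (hwd.trans hdn) hvn (by omega)).resolve_right fun hvw => ?_⟩
  exact ((h.exists_precedes_iff w hwd).1 ⟨v, hdv.le, hvw⟩).not_ge hew

theorem IsFull.prepend_d (h : IsFull π e d) (hw : w = d) : IsFull (prepend w π) e (d + 1) where
  toHasThresholds := h.hasThresholds_prepend_d hw
  isSite_of_lt v hv hvn := by
    obtain ⟨v, rfl⟩ : ∃ v', v = v' + 1 := ⟨v - 1, by omega⟩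
    rw [isSite_prepend_succ_iff (by omega)]
    exact ⟨h.isSite_of_lt v (by omega) (by omega), fun p q hpq hp hpv =>
      (h.le_of_precedes_of_le p q hpq (hw ▸ hp)).trans_lt hpv⟩
  le_of_precedes_of_le := forall_precedes_prepend.2
    ⟨by grind [shift], fun p q hpq => by have := h.le_of_precedes_of_le p q hpq; grind [shift]⟩

theorem isTail_prepend (hlow : ∀ v ≤ (w : ℕ), ¬IsSite (prepend w π) v)
    (hhigh : ∀ v : ℕ, w ≤ v → v ≤ n → IsSite π v)
    (hasc : ∃ p q, Precedes π p q ∧ p < q ∧ q < w)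
    (hdec : ∀ p q : ℕ, Precedes π p q → w ≤ p → q ≤ p) : IsTail (prepend w π) (w + 1) where
  a_le := w.isLt
  isSite_iff v hvn := by
    rcases le_or_gt v w with hvw | hwv
    · exact iff_of_false (hlow v hvw) hvw.not_gt
    · obtain ⟨v, rfl⟩ : ∃ v', v = v' + 1 := ⟨v - 1, by omega⟩
      rw [isSite_prepend_succ_iff (by omega)]
      exact iff_of_true ⟨hhigh v (by omega) (by omega), fun p q hpq hp hpv =>
        (hdec p q hpq hp).trans_lt hpv⟩ hwv
  exists_lt_precedes := by
    obtain ⟨p, q, hpq, hlt, hqw⟩ := hasc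
    refine ⟨p, q, ?_, hlt, hqw.trans (Nat.lt_succ_self w)⟩
    simpa [shift_of_lt hqw, shift_of_lt (hlt.trans hqw)] using hpq.prepend (w := w)
  le_of_precedes_of_le := forall_precedes_prepend.2
    ⟨by grind [shift], fun p q hpq => by have := hdec p q hpq; grind [shift]⟩

theorem IsFull.isTail_prepend (h : IsFull π e d) (hdw : d < w) (hwn : w < n) :
    IsTail (prepend w π) (w + 1) := by
  obtain ⟨p, hpd, hp⟩ := h.exists_lt_precedes
  have hwd : Precedes π w d := (precedes_or_precedes hwn h.d_lt hdw.ne').resolve_right fun hdw' =>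
    (h.le_of_precedes_of_le d w hdw' le_rfl).not_gt hdw
  refine PatternAvoidance.isTail_prepend (fun v hv => ?_)
    (fun v hwv hvn => h.isSite_of_lt v (hdw.trans_le hwv) hvn) ⟨p, d, hp, hpd, hdw⟩
    fun p q hpq hwp => h.le_of_precedes_of_le p q hpq (hdw.le.trans hwp)
  rw [isSite_prepend_iff_of_le hv]
  rintro ⟨-, hdec, hle⟩
  rcases le_or_gt v d with hvd | hdv
  · exact (hle w d hwd le_rfl hvd).not_gt hdw
  · exact (hdec p d hp hdv).not_gt hpd

theorem IsTail.prepend (h : IsTail π a) (haw : a ≤ w) : IsTail (prepend w π) (w + 1) := by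
  obtain ⟨p, q, hpq, hlt, hqa⟩ := h.exists_lt_precedes
  refine isTail_prepend (fun v hv => ?_) (fun v hwv hvn => (h.isSite_iff v hvn).2 (haw.trans hwv))
    ⟨p, q, hpq, hlt, hqa.trans_le haw⟩
    fun p q hpq hwp => h.le_of_precedes_of_le p q hpq (haw.trans hwp)
  rw [isSite_prepend_iff_of_le hv, h.isSite_iff v (by omega)]
  exact fun ⟨hav, hdec, _⟩ => (hdec p q hpq (hqa.trans_le hav)).not_gt hlt

end Shape

/-! ### Counting descendants -/

section Count

variable {n : ℕ} {π : Perm (Fin n)} {a d e f : ℕ}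

theorem Avoids.prepend (hπ : Avoids patterns π) {w : Fin (n + 1)} (hw : IsSite π w) :
    Avoids patterns (prepend w π) :=
  avoids_prepend_iff.2 ⟨hπ, hw⟩

theorem siteCount_of_isSite (hπ : Avoids patterns π) {v : ℕ} (hv : v < n + 1) (hs : IsSite π v)
    (m : ℕ) :
    siteCount patterns m π v = descendantCount patterns m (prepend ⟨v, hv⟩ π) :=
  siteCount_of_avoids (hπ.prepend (w := ⟨v, hv⟩) hs) m

theorem siteCount_of_not_isSite {v : ℕ} (hv : v < n + 1) (hs : ¬IsSite π v) (m : ℕ) :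
    siteCount patterns m π v = 0 :=
  siteCount_of_not_avoids (v := ⟨v, hv⟩) (fun h => hs (avoids_prepend_iff.1 h).2) m

theorem siteCount_length (hπ : Avoids patterns π) (m : ℕ) :
    siteCount patterns m π n = descendantCount patterns m (prepend (Fin.last n) π) :=
  siteCount_of_isSite hπ n.lt_succ_self (isSite_length π) m

theorem sum_Ico_sub_add_choose (han : a ≤ n) (m : ℕ) :
    ∑ v ∈ Ico a (n + 1), (n - v + m).choose m = (n - a + (m + 1)).choose (m + 1) := by
  rw [sum_Ico_reflect (fun i => (i + m).choose m) a le_rfl, Nat.sub_self, Nat.Ico_zero_eq_range,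
    Nat.succ_sub han, Nat.sum_range_add_choose, Nat.add_assoc]

theorem descendantCount_of_isTail (hπ : Avoids patterns π) (h : IsTail π a) (m : ℕ) :
    descendantCount patterns m π = (n - a + m).choose m := by
  induction m generalizing n a with
  | zero => simp [descendantCount]
  | succ m ih =>
    have hlow (v : ℕ) (hv : v < a) : siteCount patterns m π v = 0 :=
      siteCount_of_not_isSite (by have := h.a_le; omega)
        (by rw [h.isSite_iff v (hv.le.trans h.a_le)]; omega) m
    have hhigh (v : ℕ) (hav : a ≤ v) (hvn : v < n + 1) :
        siteCount patterns m π v = (n - v + m).choose m := by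
      have hv : IsSite π v := (h.isSite_iff v (by omega)).2 hav
      rw [siteCount_of_isSite hπ hvn hv, ih (hπ.prepend hv) (h.prepend hav),
        Nat.add_sub_add_right]
    rw [descendantCount_succ, ← sum_range_add_sum_Ico _ (h.a_le.trans n.le_succ),
      sum_eq_zero fun v hv => hlow v (mem_range.1 hv), zero_add,
      sum_congr rfl fun v hv => hhigh v (mem_Ico.1 hv).1 (mem_Ico.1 hv).2,
      sum_Ico_sub_add_choose h.a_le]

mutual

/-- The number by which each value in `[e, f]` raises the number of descendants of a sparse
avoider with thresholds `e`, `f`, `d`. -/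
def sparseLowWeight : ℕ → ℕ
  | 0 => 0
  | m + 1 => 1 + 2 * sparseLowWeight m + sparseHighWeight m

/-- The number by which each value in `(f, d]` raises the number of descendants of a sparse
avoider with thresholds `e`, `f`, `d`. -/
def sparseHighWeight : ℕ → ℕ
  | 0 => 0
  | m + 1 => 1 + 2 * sparseLowWeight m + 2 * sparseHighWeight m

end

theorem HasThresholds.descendantCount_succ (h : HasThresholds π e f d) (m : ℕ) :
    descendantCount patterns (m + 1) π =
      ∑ v ∈ Ico e d, siteCount patterns m π v + siteCount patterns m π d +
        ∑ v ∈ Ico (d + 1) n, siteCount patterns m π v + siteCount patterns m π n := by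
  have hed : e ≤ d := h.e_le_f.trans h.f_le_d
  have hdn := h.d_lt
  have hlow (v : ℕ) (hv : v < e) : siteCount patterns m π v = 0 :=
    siteCount_of_not_isSite (by omega) (by rw [h.isSite_iff v (by omega)]; omega) m
  rw [PatternAvoidance.descendantCount_succ, sum_range_succ,
    ← sum_range_add_sum_Ico _ (show d + 1 ≤ n from hdn), sum_range_succ,
    ← sum_range_add_sum_Ico _ hed, sum_eq_zero fun v hv => hlow v (mem_range.1 hv), zero_add]

theorem descendantCount_of_isSparse (hπ : Avoids patterns π) (h : IsSparse π e f d) (m : ℕ) :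
    descendantCount patterns m π =
      1 + (f - e + 1) * sparseLowWeight m + (d - f) * sparseHighWeight m := by
  induction m generalizing n e f d with
  | zero => simp [descendantCount, sparseLowWeight, sparseHighWeight]
  | succ m ih =>
    have hdn := h.d_lt
    have hlow : ∀ v ∈ Ico e d,
        siteCount patterns m π v = 1 + sparseLowWeight m + sparseHighWeight m := by
      intro v hv
      obtain ⟨hev, hvd⟩ := mem_Ico.1 hv
      have hs : IsSite π v := (h.isSite_iff v hvd.le).2 hev
      rw [siteCount_of_isSite hπ (by omega) hs, ih (hπ.prepend hs) (h.prepend_of_lt hev hvd)]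
      simp
    have hd : siteCount patterns m π d =
        1 + sparseLowWeight m + (d + 1 - f) * sparseHighWeight m := by
      rw [siteCount_of_isSite hπ (by omega) h.isSite_d,
        ih (hπ.prepend h.isSite_d) (h.prepend_d rfl)]
      simp
    have hhigh : ∀ v ∈ Ico (d + 1) n, siteCount patterns m π v = 0 := fun v hv =>
      siteCount_of_not_isSite (by grind) (h.not_isSite v (by grind) (by grind)) m
    have hn : siteCount patterns m π n = 1 + (d - e + 1) * sparseLowWeight m := by
      rw [siteCount_length hπ,
        ih (hπ.prepend (isSite_length π)) h.isSparse_prepend_last]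
      simp
    rw [h.descendantCount_succ, sum_congr rfl hlow, hd, sum_eq_zero hhigh, hn, sum_const,
      Nat.card_Ico, smul_eq_mul, sparseLowWeight, sparseHighWeight]
    obtain ⟨i, rfl⟩ := Nat.exists_eq_add_of_le h.e_le_f
    obtain ⟨j, rfl⟩ := Nat.exists_eq_add_of_le h.f_le_d
    rw [show e + i + j - e = i + j by omega, show e + i + j + 1 - (e + i) = j + 1 by omega,
      Nat.add_sub_cancel_left, Nat.add_sub_cancel_left]
    ring

/-- The number by which each value in `[e, d)` raises the number of descendants of a full avoider
with thresholds `e`, `d`. -/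
def fullWeight : ℕ → ℕ
  | 0 => 0
  | m + 1 => fullWeight m + sparseLowWeight (m + 1)

/-- The part of the number of descendants of a full avoider with thresholds `e`, `d` that depends
on neither threshold. -/
def fullConst : ℕ → ℕ
  | 0 => 0
  | m + 1 => fullConst m + fullWeight m + sparseLowWeight m

theorem descendantCount_of_isFull (hπ : Avoids patterns π) (h : IsFull π e d) (m : ℕ) :
    descendantCount patterns m π =
      fullConst m + (d - e) * fullWeight m + (n - d + m).choose m := by
  induction m generalizing n e d with
  | zero => simp [descendantCount, fullConst, fullWeight]
  | succ m ih =>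
    have hdn := h.d_lt
    have hlow : ∀ v ∈ Ico e d,
        siteCount patterns m π v = 1 + sparseLowWeight m + sparseHighWeight m := by
      intro v hv
      obtain ⟨hev, hvd⟩ := mem_Ico.1 hv
      have hs : IsSite π v := (h.isSite_iff v hvd.le).2 hev
      rw [siteCount_of_isSite hπ (by omega) hs,
        descendantCount_of_isSparse (hπ.prepend hs) (h.isSparse_prepend_of_lt hev hvd)]
      simp
    have hd : siteCount patterns m π d =
        fullConst m + (d + 1 - e) * fullWeight m + (n - d + m).choose m := by
      rw [siteCount_of_isSite hπ (by omega) h.isSite_d,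
        ih (hπ.prepend h.isSite_d) (h.prepend_d rfl), Nat.add_sub_add_right]
    have hhigh : ∀ v ∈ Ico (d + 1) n, siteCount patterns m π v = (n - v + m).choose m := by
      intro v hv
      obtain ⟨hdv, hvn⟩ := mem_Ico.1 hv
      have hs : IsSite π v := h.isSite_of_lt v hdv hvn.le
      rw [siteCount_of_isSite hπ (by omega) hs,
        descendantCount_of_isTail (hπ.prepend hs) (h.isTail_prepend (w := ⟨v, _⟩) hdv hvn),
        Nat.add_sub_add_right]
    have hn : siteCount patterns m π n =
        (n - n + m).choose m + (d - e + 1) * sparseLowWeight m := by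
      rw [siteCount_length hπ,
        descendantCount_of_isSparse (hπ.prepend (isSite_length π)) h.isSparse_prepend_last]
      simp
    have hchoose : (n - d + m).choose m + ∑ v ∈ Ico (d + 1) n, (n - v + m).choose m +
        (n - n + m).choose m = (n - d + (m + 1)).choose (m + 1) := by
      rw [← sum_Ico_sub_add_choose hdn.le, sum_Ico_succ_top hdn.le, sum_eq_sum_Ico_succ_bot hdn]
    rw [h.descendantCount_succ, sum_congr rfl hlow, hd, sum_congr rfl hhigh, hn, sum_const,
      Nat.card_Ico, smul_eq_mul, fullConst, fullWeight, sparseLowWeight, ← hchoose,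
      Nat.sub_add_comm (h.e_le_f.trans h.f_le_d)]
    ring

/-- The number by which each entry raises the number of descendants of a decreasing permutation,
apart from a sum of binomial coefficients. -/
def decreasingWeight : ℕ → ℕ
  | 0 => 0
  | m + 1 => decreasingWeight m + fullConst m + fullWeight m

/-- The part of the number of descendants of a decreasing permutation that does not depend on its
length. -/
def decreasingConst : ℕ → ℕ
  | 0 => 0
  | m + 1 => decreasingConst m + decreasingWeight m

theorem descendantCount_add_of_strictAnti (hπ : Avoids patterns π) (h : StrictAnti π) (m : ℕ) :
    descendantCount patterns m π + m =
      decreasingConst m + n * decreasingWeight m + ∑ k ∈ range (m + 1), (n + m).choose k := by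
  induction m generalizing n with
  | zero => simp [descendantCount, decreasingConst, decreasingWeight]
  | succ m ih =>
    have hlow : ∀ v ∈ range n, siteCount patterns m π v =
        fullConst m + fullWeight m + (n - v + m).choose m := by
      intro v hv
      have hvn := mem_range.1 hv
      have hs := isSite_of_strictAnti h v
      rw [siteCount_of_isSite hπ (by omega) hs, descendantCount_of_isFull (hπ.prepend hs)
        (isFull_prepend_of_strictAnti h hvn)]
      simp
    have hchoose : ∑ v ∈ range n, (n - v + m).choose m + 1 = (n + (m + 1)).choose (m + 1) := by
      simpa [sum_range_succ] using sum_Ico_sub_add_choose n.zero_le m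
    have hn := ih (hπ.prepend (isSite_length π)) (strictAnti_prepend_last h)
    rw [descendantCount_succ, sum_range_succ, sum_congr rfl hlow,
      siteCount_length hπ, sum_add_distrib, sum_const, card_range, smul_eq_mul, decreasingConst,
      decreasingWeight, sum_range_succ _ (m + 1), ← hchoose]
    rw [Nat.add_assoc n 1 m, Nat.add_comm 1 m] at hn
    linarith

theorem avoiderCount_patterns_add (m : ℕ) :
    avoiderCount patterns m + m = decreasingConst m + 2 ^ m := by
  rw [avoiderCount_eq_descendantCount, descendantCount_add_of_strictAnti (avoids_of_lt (by simp) _)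
    (Subsingleton.strictAnti _), zero_mul, add_zero, zero_add, Nat.sum_range_choose]

end Count

/-! ### Generating functions -/

section GeneratingFunction

theorem one_sub_C_mul_X_mul_mk {R : Type*} [CommRing R] {a : ℕ → R} (r : R) (φ : R⟦X⟧)
    (h : ∀ m, a (m + 1) = r * a m + coeff m φ) :
    (1 - C r * X) * PowerSeries.mk a = C (a 0) + X * φ := by
  rw [sub_mul, one_mul, sub_eq_iff_eq_add, mul_right_comm]
  ext (_ | m)
  · simp
  · simp [h, coeff_succ_X_mul, coeff_succ_mul_X, coeff_succ_C, add_comm]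

/-- The generating function over `ℚ` of a sequence of natural numbers. -/
noncomputable def genFun (a : ℕ → ℕ) : ℚ⟦X⟧ := PowerSeries.mk fun m => (a m : ℚ)

@[simp]
theorem coeff_genFun (a : ℕ → ℕ) (m : ℕ) : coeff m (genFun a) = (a m : ℚ) := coeff_mk m _

theorem one_sub_X_mul_genFun {a : ℕ → ℕ} (φ : ℚ⟦X⟧) (h0 : a 0 = 0)
    (h : ∀ m, (a (m + 1) : ℚ) = a m + coeff m φ) : (1 - X) * genFun a = X * φ := by
  simpa [genFun, h0] using one_sub_C_mul_X_mul_mk (a := fun m => (a m : ℚ)) 1 φ (by simpa using h)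

theorem one_sub_two_mul_X_mul_genFun {a : ℕ → ℕ} (φ : ℚ⟦X⟧)
    (h : ∀ m, (a (m + 1) : ℚ) = 2 * a m + coeff m φ) :
    (1 - 2 * X) * genFun a = C (a 0 : ℚ) + X * φ :=
  one_sub_C_mul_X_mul_mk 2 φ h

theorem one_sub_X_mul_genFun_one : (1 - X) * genFun 1 = 1 := by
  have hone : genFun 1 = PowerSeries.mk 1 := by ext; simp
  rw [hone, mul_comm, mk_one_mul_one_sub_eq_one]

theorem one_sub_X_sq_mul_genFun_id : (1 - X) ^ 2 * genFun id = X := by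
  have hid : (1 - X) * genFun id = X * genFun 1 :=
    one_sub_X_mul_genFun _ rfl fun m => by simp
  linear_combination (1 - X) * hid + X * one_sub_X_mul_genFun_one

theorem one_sub_two_mul_X_mul_genFun_two_pow : (1 - 2 * X) * genFun (2 ^ ·) = 1 := by
  simpa using one_sub_two_mul_X_mul_genFun (a := (2 ^ ·)) 0 fun m => by simp [pow_succ']

theorem one_sub_two_mul_X_mul_genFun_sparseLowWeight :
    (1 - 2 * X) * genFun sparseLowWeight = X * (genFun 1 + genFun sparseHighWeight) := by
  have hrec (m : ℕ) : (sparseLowWeight (m + 1) : ℚ) =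
      2 * sparseLowWeight m + coeff m (genFun 1 + genFun sparseHighWeight) := by
    simp only [sparseLowWeight, map_add, coeff_genFun, Pi.one_apply]
    push_cast
    ring
  simpa [sparseLowWeight] using one_sub_two_mul_X_mul_genFun _ hrec

theorem one_sub_two_mul_X_mul_genFun_sparseHighWeight :
    (1 - 2 * X) * genFun sparseHighWeight = X * (genFun 1 + 2 * genFun sparseLowWeight) := by
  have hrec (m : ℕ) : (sparseHighWeight (m + 1) : ℚ) =
      2 * sparseHighWeight m + coeff m (genFun 1 + 2 * genFun sparseLowWeight) := by
    simp only [sparseHighWeight, two_mul (genFun _), map_add, coeff_genFun, Pi.one_apply]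
    push_cast
    ring
  simpa [sparseHighWeight] using one_sub_two_mul_X_mul_genFun _ hrec

theorem mul_genFun_sparseLowWeight :
    (1 - 4 * X + 2 * X ^ 2) * genFun sparseLowWeight = X := by
  linear_combination (1 - 2 * X) * one_sub_two_mul_X_mul_genFun_sparseLowWeight +
    X * one_sub_two_mul_X_mul_genFun_sparseHighWeight + X * one_sub_X_mul_genFun_one

theorem one_sub_X_mul_genFun_fullWeight :
    (1 - X) * genFun fullWeight = genFun sparseLowWeight := by
  have h : (1 - X) * genFun fullWeight =
      X * (genFun 1 + 2 * genFun sparseLowWeight + genFun sparseHighWeight) :=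
    one_sub_X_mul_genFun _ rfl fun m => by simp [fullWeight, sparseLowWeight, two_mul]
  linear_combination h - one_sub_two_mul_X_mul_genFun_sparseLowWeight

theorem one_sub_X_mul_genFun_fullConst :
    (1 - X) * genFun fullConst = X * (genFun fullWeight + genFun sparseLowWeight) :=
  one_sub_X_mul_genFun _ rfl fun m => by
    simp only [fullConst, map_add, coeff_genFun]
    push_cast
    ring

theorem one_sub_X_mul_genFun_decreasingWeight :
    (1 - X) * genFun decreasingWeight = X * (genFun fullConst + genFun fullWeight) :=
  one_sub_X_mul_genFun _ rfl fun m => by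
    simp only [decreasingWeight, map_add, coeff_genFun]
    push_cast
    ring

theorem one_sub_X_mul_genFun_decreasingConst :
    (1 - X) * genFun decreasingConst = X * genFun decreasingWeight :=
  one_sub_X_mul_genFun _ rfl fun m => by simp [decreasingConst]

theorem mul_genFun_decreasingConst :
    (1 - X) ^ 4 * (1 - 4 * X + 2 * X ^ 2) * genFun decreasingConst =
      X ^ 3 * (1 + X - X ^ 2) := by
  have hlow : (1 - X) ^ 4 * genFun decreasingConst =
      X ^ 2 * (1 + X - X ^ 2) * genFun sparseLowWeight := by
    linear_combination (1 - X) ^ 3 * one_sub_X_mul_genFun_decreasingConst +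
      X * (1 - X) ^ 2 * one_sub_X_mul_genFun_decreasingWeight +
      X ^ 2 * (1 - X) * one_sub_X_mul_genFun_fullConst +
      X ^ 2 * one_sub_X_mul_genFun_fullWeight
  linear_combination (1 - 4 * X + 2 * X ^ 2) * hlow +
    X ^ 2 * (1 + X - X ^ 2) * mul_genFun_sparseLowWeight

theorem avoiderGF_patterns_add_genFun_id :
    avoiderGF patterns + genFun id = genFun decreasingConst + genFun (2 ^ ·) := by
  ext m
  simpa [avoiderGF] using mod_cast avoiderCount_patterns_add m

end GeneratingFunction

end PatternAvoidance

open PatternAvoidance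

theorem statement_5 :
    ((1 : PowerSeries ℚ) - X)^4 * (1 - 2*X) * (1 - 4*X + 2*X^2) * avoiderGF ({![0,2,3,1], ![2,0,1,3], ![2,3,0,1]} : Set (Fin 4 → Fin 4)) =
      1 - 9*X + 32*X^2 - 58*X^3 + 58*X^4 - 33*X^5 + 8*X^6 := by
  have hF : avoiderGF {![0, 2, 3, 1], ![2, 0, 1, 3], ![2, 3, 0, 1]} =
      genFun decreasingConst + genFun (2 ^ ·) - genFun id :=
    eq_sub_of_add_eq avoiderGF_patterns_add_genFun_id
  rw [hF]
  linear_combination (1 - 2 * X) * mul_genFun_decreasingConst +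
    (1 - X) ^ 4 * (1 - 4 * X + 2 * X ^ 2) * one_sub_two_mul_X_mul_genFun_two_pow -
    (1 - X) ^ 2 * (1 - 2 * X) * (1 - 4 * X + 2 * X ^ 2) * one_sub_X_sq_mul_genFun_id
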